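/- Let X ⊆ ℝᵖ, γ₀ ∈ ℝˢ, r > 0, and let h : X × ℝˢ → ℝ be positive with h(x,γ₀) = 1 for all x ∈ X, twice continuously differentiable in γ on the ball B(γ₀,r) for every x ∈ X, and satisfying sup_{x∈X} ‖∇h(x,γ₀)‖ ≤ M₁ < ∞ and sup_{x∈X} sup_{γ∈B(γ₀,r)} ‖h''(x,γ)‖₂ ≤ M₂ < ∞, where ∇h and h'' denote the gradient and Hessian in γ and ‖·‖₂ is the spectral norm. Fix a design ξ with points x₁,…,x_k ∈ X and weights ξᵢ ≥ 0 summing to 1, and fix λ ∈ ℝˢ, λ ≠ 0. Then there exist a constant C > 0 and an integer N such that for all n ≥ N, setting γ₁ = γ₀ + λ/√n, | I₁₂(ξ;γ₁) − 1 − ζ(ξ,λ,γ₀)/n | ≤ C·‖λ‖³/n^{3/2}, i.e. I₁₂(ξ;γ₁) = 1 + ζ(ξ,λ,γ₀)/n + O(‖λ‖³/n^{3/2}). -/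

import Mathlib

open Filter Topology Asymptotics

theorem ContDiffAt.sub_sub_fderiv_isBigO {E F : Type*} [NormedAddCommGroup E] [NormedSpace ℝ E]
    [NormedAddCommGroup F] [NormedSpace ℝ F] {f : E → F} {a : E} (hf : ContDiffAt ℝ 2 f a) :
    (fun y => f y - f a - fderiv ℝ f a (y - a)) =O[𝓝 a] fun y => ‖y - a‖ ^ 2 := by
  have hd : DifferentiableAt ℝ (fderiv ℝ f) a :=
    (hf.fderiv_right (m := 1) (by norm_num)).differentiableAt (by norm_num)
  obtain ⟨C, hC⟩ := hd.isBigO_sub.bound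
  have hdiff : ∀ᶠ y in 𝓝 a, DifferentiableAt ℝ f y :=
    (hf.eventually (by simp)).mono fun y hy => hy.differentiableAt (by norm_num)
  obtain ⟨ε, hε, hball⟩ := Metric.eventually_nhds_iff_ball.1 (hC.and hdiff)
  refine IsBigO.of_bound |C| ?_
  filter_upwards [Metric.ball_mem_nhds a hε] with y hy
  have hsub : ∀ z ∈ Metric.closedBall a ‖y - a‖, z ∈ Metric.ball a ε := fun z hz => by
    rw [mem_ball_iff_norm] at hy ⊢
    exact (mem_closedBall_iff_norm.1 hz).trans_lt hy
  have key := (convex_closedBall a ‖y - a‖).norm_image_sub_le_of_norm_fderiv_le'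
    (𝕜 := ℝ) (f := f) (φ := fderiv ℝ f a) (C := |C| * ‖y - a‖) (x := a) (y := y)
    (fun z hz => (hball z (hsub z hz)).2)
    (fun z hz => (hball z (hsub z hz)).1.trans <| by
      have := mem_closedBall_iff_norm.1 hz
      gcongr
      exact le_abs_self C)
    (by simp) (mem_closedBall_iff_norm.2 le_rfl)
  simpa [pow_two, mul_assoc] using key

theorem Real.log_one_add_sub_isBigO :
    (fun u : ℝ => Real.log (1 + u) - u + u ^ 2 / 2) =O[𝓝 0] fun u => u ^ 3 := by
  refine IsBigO.of_bound 2 ?_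
  filter_upwards [Metric.ball_mem_nhds (0 : ℝ) (by norm_num : (0 : ℝ) < 1 / 2)] with u hu
  have hu' : |u| < 1 / 2 := by simpa using hu
  have key := Real.abs_log_sub_add_sum_range_le (x := -u) (by rw [abs_neg]; linarith) 2
  have e : (∑ i ∈ Finset.range 2, (-u) ^ (i + 1) / ((i : ℝ) + 1)) + Real.log (1 - -u)
      = Real.log (1 + u) - u + u ^ 2 / 2 := by
    simp only [Finset.sum_range_succ, Finset.sum_range_zero, sub_neg_eq_add]
    push_cast
    ring
  rw [e, abs_neg] at key
  rw [Real.norm_eq_abs, Real.norm_eq_abs, abs_pow]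
  refine key.trans ?_
  rw [div_le_iff₀ (by linarith)]
  have : 0 ≤ |u| ^ 3 := by positivity
  norm_num
  nlinarith

theorem log_one_add_isBigO_of_linear {u : ℝ → ℝ} {a : ℝ}
    (hu : (fun t => u t - a * t) =O[𝓝 0] fun t => t ^ 2) :
    (fun t => Real.log (1 + u t) - u t + (a * t) ^ 2 / 2) =O[𝓝 0] fun t => t ^ 3 := by
  have hlin : (fun t : ℝ => a * t) =O[𝓝 0] fun t => t := isBigO_const_mul_self a _ _
  have hsq : (fun t : ℝ => t ^ 2) =O[𝓝 0] fun t => t := by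
    simpa using (isLittleO_pow_pow (𝕜 := ℝ) (m := 1) (n := 2) (by norm_num)).isBigO
  have hut : u =O[𝓝 0] fun t => t := by
    simpa using (hu.trans hsq).add hlin
  have hlim : Tendsto u (𝓝 0) (𝓝 0) := hut.trans_tendsto tendsto_id
  have h1 : (fun t => Real.log (1 + u t) - u t + u t ^ 2 / 2) =O[𝓝 0] fun t => t ^ 3 :=
    (Real.log_one_add_sub_isBigO.comp_tendsto hlim).trans (hut.pow 3)
  have h2 : (fun t => (u t - a * t) * (u t + a * t)) =O[𝓝 0] fun t => t ^ 3 := by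
    simpa [pow_succ] using hu.mul (hut.add hlin)
  refine (h1.sub (h2.const_mul_left (1 / 2))).congr_left fun t => ?_
  ring

theorem log_sum_sub_sum_log_isBigO {ι : Type*} [Fintype ι] {w a : ι → ℝ} {f : ι → ℝ → ℝ}
    (hw : ∑ i, w i = 1) (hf : ∀ i, (fun t => f i t - 1 - a i * t) =O[𝓝 0] fun t => t ^ 2) :
    (fun t => Real.log (∑ i, w i * f i t) - ∑ i, w i * Real.log (f i t)
      - (1 / 2) * ((∑ i, w i * a i ^ 2) - (∑ i, w i * a i) ^ 2) * t ^ 2)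
      =O[𝓝 0] fun t => t ^ 3 := by
  have h1 := fun i => log_one_add_isBigO_of_linear (hf i)
  have hsum : (fun t => ((∑ i, w i * f i t) - 1) - (∑ i, w i * a i) * t)
      =O[𝓝 0] fun t => t ^ 2 := by
    refine (IsBigO.sum (s := Finset.univ) fun i _ => (hf i).const_mul_left (w i)).congr_left
      fun t => ?_
    simp only [Finset.sum_apply, mul_sub, Finset.sum_sub_distrib, Finset.sum_mul, mul_one, hw,
      mul_assoc]
  have h2 := log_one_add_isBigO_of_linear hsum
  have h3 := IsBigO.sum (s := Finset.univ) fun i _ => (h1 i).const_mul_left (w i)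
  refine (h2.sub h3).congr_left fun t => ?_
  have e : ∑ i, w i * (Real.log (1 + (f i t - 1)) - (f i t - 1) + (a i * t) ^ 2 / 2)
      = ∑ i, w i * Real.log (f i t) - ((∑ i, w i * f i t) - ∑ i, w i)
        + (∑ i, w i * a i ^ 2) * (t ^ 2 / 2) := by
    rw [← Finset.sum_sub_distrib, ← Finset.sum_sub_distrib, Finset.sum_mul,
      ← Finset.sum_add_distrib]
    refine Finset.sum_congr rfl fun i _ => ?_
    rw [add_sub_cancel]
    ring
  rw [Finset.sum_apply, e, hw, add_sub_cancel]
  ring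

theorem ContDiffAt.sub_sub_fderiv_line_isBigO {E : Type*} [NormedAddCommGroup E]
    [NormedSpace ℝ E] {f : E → ℝ} {a : E} (hf : ContDiffAt ℝ 2 f a) (v : E) :
    (fun t : ℝ => f (a + t • v) - f a - fderiv ℝ f a v * t) =O[𝓝 0] fun t => t ^ 2 := by
  have hlim : Tendsto (fun t : ℝ => a + t • v) (𝓝 0) (𝓝 a) := by
    have : Continuous fun t : ℝ => a + t • v := by fun_prop
    simpa using this.tendsto 0
  have h1 := hf.sub_sub_fderiv_isBigO.comp_tendsto hlim
  refine (h1.trans (IsBigO.of_bound (‖v‖ ^ 2) (Eventually.of_forall fun t => ?_))).congr_left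
    fun t => ?_
  · simp [norm_smul, mul_pow, mul_comm]
  · simp [mul_comm]

/-- First order approximation of the KL-criterion by the noncentrality parameter:
I₁₂(ξ;γ₀+λ/√n) = 1 + ζ(ξ,λ,γ₀)/n + O(‖λ‖³/n^{3/2}), for a fixed design ξ and λ ≠ 0. -/
theorem stmt_4 (p s : ℕ) (X : Set (Fin p → ℝ))
    (γ₀ : EuclideanSpace ℝ (Fin s)) (r : ℝ) (hr : 0 < r)
    (h : (Fin p → ℝ) → EuclideanSpace ℝ (Fin s) → ℝ)
    (hpos : ∀ x ∈ X, ∀ γ, 0 < h x γ)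
    (hone : ∀ x ∈ X, h x γ₀ = 1)
    (hsmooth : ∀ x ∈ X, ContDiffOn ℝ 2 (h x) (Metric.ball γ₀ r))
    (M₁ M₂ : ℝ)
    (hM₁ : ∀ x ∈ X, ‖fderiv ℝ (h x) γ₀‖ ≤ M₁)
    (hM₂ : ∀ x ∈ X, ∀ γ ∈ Metric.ball γ₀ r, ‖fderiv ℝ (fun γ' => fderiv ℝ (h x) γ') γ‖ ≤ M₂)
    (k : ℕ) (x : Fin k → (Fin p → ℝ)) (hx : ∀ i, x i ∈ X)
    (w : Fin k → ℝ) (hw : ∀ i, 0 ≤ w i) (hw1 : ∑ i, w i = 1)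
    (lam : EuclideanSpace ℝ (Fin s)) (hlam : lam ≠ 0) :
    ∃ C > 0, ∃ N : ℕ, ∀ n : ℕ, N ≤ n →
      |(1 + Real.log (∑ i, w i * h (x i) (γ₀ + (Real.sqrt n)⁻¹ • lam))
          - ∑ i, w i * Real.log (h (x i) (γ₀ + (Real.sqrt n)⁻¹ • lam)))
        - 1
        - (1 / 2) * ((∑ i, w i * (fderiv ℝ (h (x i)) γ₀ lam) ^ 2)
            - (∑ i, w i * fderiv ℝ (h (x i)) γ₀ lam) ^ 2) / n|
      ≤ C * ‖lam‖ ^ 3 / (n : ℝ) ^ ((3 : ℝ) / 2) := by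
  have hlin : ∀ i, (fun t : ℝ => h (x i) (γ₀ + t • lam) - 1 - fderiv ℝ (h (x i)) γ₀ lam * t)
      =O[𝓝 0] fun t => t ^ 2 := fun i => by
    have hc : ContDiffAt ℝ 2 (h (x i)) γ₀ :=
      (hsmooth _ (hx i)).contDiffAt (Metric.ball_mem_nhds γ₀ hr)
    simpa [hone _ (hx i)] using hc.sub_sub_fderiv_line_isBigO lam
  have htend : Tendsto (fun n : ℕ => (Real.sqrt n)⁻¹) atTop (𝓝 0) :=
    tendsto_inv_atTop_zero.comp (Real.tendsto_sqrt_atTop.comp tendsto_natCast_atTop_atTop)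
  obtain ⟨C, hC, hbound⟩ :=
    ((log_sum_sub_sum_log_isBigO hw1 hlin).comp_tendsto htend).exists_pos
  obtain ⟨N, hN⟩ := eventually_atTop.1 hbound.bound
  have hlam' : 0 < ‖lam‖ ^ 3 := by positivity
  refine ⟨C / ‖lam‖ ^ 3, by positivity, N, fun n hn => ?_⟩
  have hpow : (n : ℝ) ^ ((3 : ℝ) / 2) = Real.sqrt n ^ 3 := by
    rw [Real.sqrt_eq_rpow, ← Real.rpow_natCast, ← Real.rpow_mul n.cast_nonneg]
    norm_num
  have hsq : ((Real.sqrt n)⁻¹) ^ 2 = (n : ℝ)⁻¹ := by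
    rw [inv_pow, Real.sq_sqrt n.cast_nonneg]
  have key := hN n hn
  simp only [Function.comp_apply, Real.norm_eq_abs, hsq] at key
  rw [abs_of_nonneg (by positivity : 0 ≤ ((Real.sqrt n)⁻¹) ^ 3), inv_pow, ← hpow] at key
  rw [div_mul_cancel₀ _ hlam'.ne', div_eq_mul_inv C]
  refine le_of_eq_of_le (congrArg _ ?_) key
  ring
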